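/- Fix M ∈ ℕ, an exponent θ_p ≥ 0, and N > θ_p + 3/2. Let I be an interval with |I| > 2^{M+2}. Then the sum over dyadic lagom intervals J ∈ 𝒟_M (i.e., dyadic J ⊂ 𝔹_{M·2^M} with 2^{−M} ≤ |J| ≤ 2^M) of (|J|/|I|)^{θ_p + 3/2}·(1 + |I|^{−1}|c(I)−c(J)|)^{−N} is bounded by a constant (depending on θ_p, N) times (2^M/|I|)^{θ_p + 1/2}·(1 + M^{−1}·rdist(I, 𝔹_{2^M}))^{−N}. -/

import Mathlib

/-- `diam(I ∪ J)` for intervals given by centers and lengths. -/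
noncomputable def diamUnion (c1 l1 c2 l2 : ℝ) : ℝ :=
  max (c1 + l1 / 2) (c2 + l2 / 2) - min (c1 - l1 / 2) (c2 - l2 / 2)

/-- The relative distance `rdist(I,J) = diam(I ∪ J)/max(|I|,|J|)`. -/
noncomputable def rdistI (c1 l1 c2 l2 : ℝ) : ℝ := diamUnion c1 l1 c2 l2 / max l1 l2

/-- The dyadic interval `[2^{-j}k, 2^{-j}(k+1)]` indexed by `p = (j,k)` is a lagom
interval at scale `M`: `2^{−M} ≤ |J| ≤ 2^M` and `rdist(J, 𝔹_{2^M}) ≤ M`. -/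
def DyadicLagom (M : ℕ) (p : ℤ × ℤ) : Prop :=
  (2 : ℝ) ^ (-(M : ℤ)) ≤ (2 : ℝ) ^ (-p.1) ∧ (2 : ℝ) ^ (-p.1) ≤ 2 ^ M ∧
    rdistI ((2 : ℝ) ^ (-p.1) * (p.2 + 1/2)) ((2 : ℝ) ^ (-p.1)) 0 (2 ^ M) ≤ M


lemma s13_fiber (δ x : ℝ) (hδ : 0 < δ) (hδ1 : δ ≤ 1) (K : Finset ℤ) (m : ℤ) :
    ((K.filter (fun k : ℤ => ⌊x - δ * k⌋ = m)).card : ℝ) ≤ 2 / δ := by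
  have hsub : K.filter (fun k : ℤ => ⌊x - δ * k⌋ = m) ⊆
      Finset.Icc ⌈(x - m - 1) / δ⌉ ⌊(x - m) / δ⌋ := by
    intro k hk
    rw [Finset.mem_filter] at hk
    obtain ⟨_, hk⟩ := hk
    rw [Int.floor_eq_iff] at hk
    rw [Finset.mem_Icc, Int.ceil_le, Int.le_floor, div_le_iff₀ hδ, le_div_iff₀ hδ]
    constructor <;> linarith [hk.1, hk.2, mul_comm δ (k : ℝ)]
  have h1 := Finset.card_le_card hsub
  rw [Int.card_Icc] at h1
  have h2 : ((K.filter (fun k : ℤ => ⌊x - δ * k⌋ = m)).card : ℝ) ≤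
      (((⌊(x - m) / δ⌋ + 1 - ⌈(x - m - 1) / δ⌉).toNat : ℕ) : ℝ) := by exact_mod_cast h1
  refine h2.trans ?_
  have hone : 1 ≤ 1 / δ := by rw [le_div_iff₀ hδ]; linarith
  have h22 : 2 / δ = 1 / δ + 1 / δ := by ring
  by_cases hn : 0 ≤ ⌊(x - m) / δ⌋ + 1 - ⌈(x - m - 1) / δ⌉
  · have h3 : (((⌊(x - m) / δ⌋ + 1 - ⌈(x - m - 1) / δ⌉).toNat : ℕ) : ℝ)
        = ((⌊(x - m) / δ⌋ + 1 - ⌈(x - m - 1) / δ⌉ : ℤ) : ℝ) := by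
      exact_mod_cast Int.toNat_of_nonneg hn
    rw [h3]
    push_cast
    have h4 := Int.floor_le ((x - m) / δ)
    have h5 := Int.le_ceil ((x - m - 1) / δ)
    have h6 : (x - m - 1) / δ = (x - m) / δ - 1 / δ := by ring
    linarith
  · rw [Int.toNat_of_nonpos (by omega)]
    simp only [Nat.cast_zero]
    positivity

lemma s13_summ (N : ℝ) (hN : 1 < N) :
    Summable (fun m : ℤ => (1 + |(m : ℝ)|) ^ (-N)) := by
  have hnat : Summable (fun n : ℕ => (1 + (n : ℝ)) ^ (-N)) := by
    have h := (summable_nat_add_iff 1).2 (Real.summable_nat_rpow.2 (by linarith : -N < -1))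
    refine h.congr ?_
    intro n
    push_cast
    rw [add_comm]
  apply Summable.of_nat_of_neg
  · simpa using hnat
  · simpa using hnat

lemma s13_A (N : ℝ) (hN : 1 < N) : ∃ T > 0, ∀ δ x : ℝ, 0 < δ → δ ≤ 1 → ∀ K : Finset ℤ,
    ∑ k ∈ K, (1 + |x - δ * k|) ^ (-N) ≤ T / δ := by
  have hs := s13_summ N hN
  set S := ∑' m : ℤ, (1 + |(m : ℝ)|) ^ (-N) with hS
  have hS0 : 0 ≤ S := tsum_nonneg fun m => by positivity
  refine ⟨2 * (2 : ℝ) ^ N * (S + 1), by positivity, ?_⟩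
  intro δ x hδ hδ1 K
  have hpt : ∀ k : ℤ, (1 + |x - δ * k|) ^ (-N) ≤
      (2 : ℝ) ^ N * (1 + |((⌊x - δ * k⌋ : ℤ) : ℝ)|) ^ (-N) := by
    intro k
    have e : (2 : ℝ) ^ N = ((1 : ℝ) / 2) ^ (-N) := by
      rw [Real.rpow_neg (by norm_num), ← Real.inv_rpow (by norm_num)]; norm_num
    rw [e, ← Real.mul_rpow (by norm_num) (by positivity)]
    apply Real.rpow_le_rpow_of_nonpos (by positivity) _ (by linarith)
    have h1 := Int.floor_le (x - δ * k)
    have h2 := Int.lt_floor_add_one (x - δ * k)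
    have : |((⌊x - δ * k⌋ : ℤ) : ℝ)| ≤ |x - δ * k| + 1 := by
      rw [abs_le]
      constructor
      · linarith [neg_abs_le (x - δ * k)]
      · linarith [le_abs_self (x - δ * k)]
    linarith [abs_nonneg (x - δ * k)]
  classical
  calc ∑ k ∈ K, (1 + |x - δ * k|) ^ (-N)
      ≤ ∑ k ∈ K, (2 : ℝ) ^ N * (1 + |((⌊x - δ * k⌋ : ℤ) : ℝ)|) ^ (-N) :=
        Finset.sum_le_sum fun k _ => hpt k
    _ = ∑ m ∈ K.image (fun k : ℤ => ⌊x - δ * k⌋),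
          ∑ k ∈ K.filter (fun k : ℤ => ⌊x - δ * k⌋ = m),
            (2 : ℝ) ^ N * (1 + |((⌊x - δ * k⌋ : ℤ) : ℝ)|) ^ (-N) := by
        rw [Finset.sum_fiberwise_of_maps_to]
        intro k hk
        exact Finset.mem_image_of_mem _ hk
    _ ≤ ∑ m ∈ K.image (fun k : ℤ => ⌊x - δ * k⌋),
          (2 / δ * (2 : ℝ) ^ N) * (1 + |(m : ℝ)|) ^ (-N) := by
        apply Finset.sum_le_sum
        intro m _
        have : ∑ k ∈ K.filter (fun k : ℤ => ⌊x - δ * k⌋ = m),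
            (2 : ℝ) ^ N * (1 + |((⌊x - δ * k⌋ : ℤ) : ℝ)|) ^ (-N) =
            ∑ k ∈ K.filter (fun k : ℤ => ⌊x - δ * k⌋ = m),
            (2 : ℝ) ^ N * (1 + |(m : ℝ)|) ^ (-N) := by
          apply Finset.sum_congr rfl
          intro k hk
          rw [(Finset.mem_filter.1 hk).2]
        rw [this, Finset.sum_const, nsmul_eq_mul, mul_assoc]
        exact mul_le_mul_of_nonneg_right (s13_fiber δ x hδ hδ1 K m) (by positivity)
    _ = (2 / δ * (2 : ℝ) ^ N) * ∑ m ∈ K.image (fun k : ℤ => ⌊x - δ * k⌋),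
          (1 + |(m : ℝ)|) ^ (-N) := by rw [Finset.mul_sum]
    _ ≤ (2 / δ * (2 : ℝ) ^ N) * (S + 1) := by
        apply mul_le_mul_of_nonneg_left _ (by positivity)
        have := hs.sum_le_tsum (K.image (fun k : ℤ => ⌊x - δ * k⌋))
          (fun m _ => by positivity)
        linarith
    _ = _ := by ring

lemma s13_rdist (M : ℕ) (cI L : ℝ) (hL : (2 : ℝ) ^ (M + 2) < L) :
    0 ≤ rdistI cI L 0 (2 ^ M) ∧ rdistI cI L 0 (2 ^ M) ≤ 1 + 2 * (|cI| / L) := by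
  have hp : (0 : ℝ) < 2 ^ M := by positivity
  have hL' : 4 * (2 : ℝ) ^ M < L := by rw [pow_add] at hL; linarith
  have hL0 : 0 < L := by linarith
  have hm : max L ((2 : ℝ) ^ M) = L := max_eq_left (by linarith)
  unfold rdistI diamUnion
  rw [hm]
  have h1 := le_abs_self cI
  have h2 := neg_abs_le cI
  constructor
  · apply div_nonneg _ hL0.le
    have := le_max_right (cI + L / 2) (0 + (2 : ℝ) ^ M / 2)
    have := min_le_right (cI - L / 2) (0 - (2 : ℝ) ^ M / 2)
    linarith
  · rw [div_le_iff₀ hL0]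
    have e : (1 + 2 * (|cI| / L)) * L = L + 2 * |cI| := by field_simp
    rw [e]
    have a1 : max (cI + L / 2) (0 + (2 : ℝ) ^ M / 2) ≤ |cI| + L / 2 :=
      max_le (by linarith) (by linarith [abs_nonneg cI])
    have a2 : -(|cI| + L / 2) ≤ min (cI - L / 2) (0 - (2 : ℝ) ^ M / 2) :=
      le_min (by linarith) (by linarith [abs_nonneg cI])
    linarith

lemma s13_B (N : ℝ) (hN : 1 < N) : ∃ C > 0, ∀ M : ℕ, 1 ≤ M → ∀ cI L : ℝ,
    (2 : ℝ) ^ (M + 2) < L → ∀ s : ℕ,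
    ∑ k ∈ Finset.Ico (-((M : ℤ) * 2 ^ s)) ((M : ℤ) * 2 ^ s),
      (1 + |cI - (2 : ℝ) ^ M / 2 ^ s * (k + 1 / 2)| / L) ^ (-N) ≤
      C * (2 ^ s / ((2 : ℝ) ^ M / L)) * (1 + (M : ℝ)⁻¹ * rdistI cI L 0 (2 ^ M)) ^ (-N) := by
  obtain ⟨T, hT, hA⟩ := s13_A N hN
  refine ⟨T * 4 ^ N + 2 * 6 ^ N, by positivity, ?_⟩
  intro M hM cI L hL s
  obtain ⟨hr0, hr1⟩ := s13_rdist M cI L hL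
  set r := rdistI cI L 0 (2 ^ M) with hr
  have hp : (0 : ℝ) < 2 ^ M := by positivity
  have hL' : 4 * (2 : ℝ) ^ M < L := by rw [pow_add] at hL; linarith
  have hL0 : 0 < L := by linarith
  have hM1 : (1 : ℝ) ≤ M := by exact_mod_cast hM
  have hM0 : (0 : ℝ) < M := by linarith
  have hs1 : (1 : ℝ) ≤ 2 ^ s := one_le_pow₀ (by norm_num)
  have hbase : 0 < 1 + (M : ℝ)⁻¹ * r := by positivity
  have hD : 0 < (1 + (M : ℝ)⁻¹ * r) ^ (-N) := Real.rpow_pos_of_pos hbase _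
  set D := (1 + (M : ℝ)⁻¹ * r) ^ (-N) with hDdef
  have ha1 : (2 : ℝ) ^ M / L ≤ 1 := by rw [div_le_one hL0]; linarith
  have ha0 : 0 < (2 : ℝ) ^ M / L := by positivity
  set a := (2 : ℝ) ^ M / L with ha
  have hX : 0 < (2 : ℝ) ^ s / a := by positivity
  by_cases hc : |cI| / L ≤ M
  · have h4 : 1 + (M : ℝ)⁻¹ * r ≤ 4 := by
      have : (M : ℝ)⁻¹ * r ≤ 3 := by
        rw [inv_mul_le_iff₀ hM0]; linarith
      linarith
    have hD4 : 1 ≤ (4 : ℝ) ^ N * D := by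
      have := Real.rpow_le_rpow_of_nonpos hbase h4 (by linarith : -N ≤ 0)
      rw [Real.rpow_neg (by norm_num)] at this
      have h4p : (0 : ℝ) < 4 ^ N := by positivity
      rwa [inv_le_iff_one_le_mul₀' h4p] at this
    have hδ0 : 0 < a / 2 ^ s := by positivity
    have hδ1 : a / 2 ^ s ≤ 1 := by rw [div_le_one (by positivity)]; linarith
    have key := hA (a / 2 ^ s) (cI / L - a / 2 ^ s / 2) hδ0 hδ1
      (Finset.Ico (-((M : ℤ) * 2 ^ s)) ((M : ℤ) * 2 ^ s))
    have e : ∀ k : ℤ, (1 + |cI - (2 : ℝ) ^ M / 2 ^ s * (k + 1 / 2)| / L) =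
        (1 + |cI / L - a / 2 ^ s / 2 - a / 2 ^ s * k|) := by
      intro k
      rw [← abs_of_pos hL0, ← abs_div, abs_of_pos hL0]
      congr 2
      rw [ha]; field_simp; ring
    simp only [e]
    refine key.trans ?_
    have e2 : T / (a / 2 ^ s) = T * (2 ^ s / a) := by field_simp
    rw [e2]
    have h6 : 0 ≤ 2 * (6 : ℝ) ^ N * (2 ^ s / a) * D := by positivity
    have h7 : T * (2 ^ s / a) * 1 ≤ T * (2 ^ s / a) * ((4 : ℝ) ^ N * D) :=
      mul_le_mul_of_nonneg_left hD4 (by positivity)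
    nlinarith
  · push Not at hc
    have hpt : ∀ k ∈ Finset.Ico (-((M : ℤ) * 2 ^ s)) ((M : ℤ) * 2 ^ s),
        (1 + |cI - (2 : ℝ) ^ M / 2 ^ s * (k + 1 / 2)| / L) ^ (-N) ≤ 6 ^ N * (M : ℝ)⁻¹ * D := by
      intro k hk
      rw [Finset.mem_Ico] at hk
      have k1 : -((M : ℝ) * 2 ^ s) ≤ k := by exact_mod_cast hk.1
      have k2 : (k : ℝ) + 1 ≤ (M : ℝ) * 2 ^ s := by exact_mod_cast hk.2
      have hcJ : |(2 : ℝ) ^ M / 2 ^ s * (k + 1 / 2)| ≤ M * L / 4 := by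
        rw [abs_mul, abs_of_pos (by positivity : (0 : ℝ) < 2 ^ M / 2 ^ s)]
        have : |(k : ℝ) + 1 / 2| ≤ M * 2 ^ s := by
          rw [abs_le]; constructor <;> linarith
        calc (2 : ℝ) ^ M / 2 ^ s * |(k : ℝ) + 1 / 2| ≤ (2 : ℝ) ^ M / 2 ^ s * (M * 2 ^ s) := by
              gcongr
          _ = M * 2 ^ M := by field_simp
          _ ≤ M * L / 4 := by nlinarith
      have hdist : 3 / 4 * (|cI| / L) ≤ |cI - (2 : ℝ) ^ M / 2 ^ s * (k + 1 / 2)| / L := by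
        rw [le_div_iff₀ hL0]
        have e : 3 / 4 * (|cI| / L) * L = 3 / 4 * |cI| := by field_simp
        rw [e]
        have := abs_sub_abs_le_abs_sub cI ((2 : ℝ) ^ M / 2 ^ s * (k + 1 / 2))
        rw [lt_div_iff₀ hL0] at hc
        linarith
      have hlow : (1 / 6) * M * (1 + (M : ℝ)⁻¹ * r) ≤
          1 + |cI - (2 : ℝ) ^ M / 2 ^ s * (k + 1 / 2)| / L := by
        have e : (1 / 6) * M * (1 + (M : ℝ)⁻¹ * r) = (1 / 6) * (M + r) := by field_simp
        rw [e]
        linarith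
      have h1 := Real.rpow_le_rpow_of_nonpos (by positivity) hlow (by linarith : -N ≤ 0)
      refine h1.trans ?_
      rw [Real.mul_rpow (by positivity) hbase.le, Real.mul_rpow (by norm_num) hM0.le]
      have e6 : ((1 : ℝ) / 6) ^ (-N) = 6 ^ N := by
        rw [Real.rpow_neg (by norm_num), ← Real.inv_rpow (by norm_num)]; norm_num
      rw [e6]
      have hMN : (M : ℝ) ^ (-N) ≤ (M : ℝ)⁻¹ := by
        rw [← Real.rpow_neg_one]
        exact Real.rpow_le_rpow_of_exponent_le hM1 (by linarith)
      gcongr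
    refine (Finset.sum_le_sum hpt).trans ?_
    rw [Finset.sum_const, nsmul_eq_mul, Int.card_Ico]
    have hcard : ((((M : ℤ) * 2 ^ s - -((M : ℤ) * 2 ^ s)).toNat : ℕ) : ℝ) = 2 * M * 2 ^ s := by
      have : ((M : ℤ) * 2 ^ s - -((M : ℤ) * 2 ^ s)) = ((2 * M * 2 ^ s : ℕ) : ℤ) := by
        push_cast; ring
      rw [this, Int.toNat_natCast]; push_cast; ring
    rw [hcard]
    have e : 2 * (M : ℝ) * 2 ^ s * (6 ^ N * (M : ℝ)⁻¹ * D) = 2 * 6 ^ N * 2 ^ s * D := by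
      field_simp
    rw [e]
    have hle : (2 : ℝ) ^ s ≤ 2 ^ s / a := by
      rw [le_div_iff₀ ha0]; nlinarith
    have h4p : (0 : ℝ) < 4 ^ N := by positivity
    calc 2 * 6 ^ N * 2 ^ s * D ≤ 2 * 6 ^ N * (2 ^ s / a) * D := by gcongr
      _ ≤ (T * 4 ^ N + 2 * 6 ^ N) * (2 ^ s / a) * D := by
        gcongr
        have := mul_pos hT h4p
        linarith

lemma s13_mem (M : ℕ) (p : ℤ × ℤ) (h : DyadicLagom M p) :
    ∃ s ∈ Finset.range (2 * M + 1), p.1 = (s : ℤ) - M ∧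
      p.2 ∈ Finset.Ico (-((M : ℤ) * 2 ^ s)) ((M : ℤ) * 2 ^ s) := by
  obtain ⟨h1, h2, h3⟩ := h
  have g1 : -(M : ℤ) ≤ -p.1 := (zpow_le_zpow_iff_right₀ (by norm_num : (1 : ℝ) < 2)).1 h1
  have g2 : -p.1 ≤ (M : ℤ) := by
    rw [← zpow_natCast] at h2
    exact (zpow_le_zpow_iff_right₀ (by norm_num : (1 : ℝ) < 2)).1 h2
  refine ⟨(p.1 + M).toNat, ?_, ?_, ?_⟩
  · rw [Finset.mem_range]; omega
  · omega
  · obtain ⟨s, hs⟩ : ∃ s : ℕ, p.1 + M = s := ⟨(p.1 + M).toNat, by omega⟩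
    rw [hs, Int.toNat_natCast]
    have hp : (0 : ℝ) < 2 ^ M := by positivity
    have hsp : (0 : ℝ) < 2 ^ s := by positivity
    have e : (2 : ℝ) ^ (-p.1) = 2 ^ M / 2 ^ s := by
      have : -p.1 = (M : ℤ) - s := by omega
      rw [this, zpow_sub₀ (by norm_num), zpow_natCast, zpow_natCast]
    unfold rdistI diamUnion at h3
    rw [max_eq_right h2, div_le_iff₀ hp, e] at h3
    set h : ℝ := 2 ^ M / 2 ^ s with hh
    have hpos : 0 < h := by positivity
    have a1 := le_max_left (h * (p.2 + 1 / 2) + h / 2) (0 + (2 : ℝ) ^ M / 2)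
    have a2 := min_le_right (h * (p.2 + 1 / 2) - h / 2) (0 - (2 : ℝ) ^ M / 2)
    have a3 := le_max_right (h * (p.2 + 1 / 2) + h / 2) (0 + (2 : ℝ) ^ M / 2)
    have a4 := min_le_left (h * (p.2 + 1 / 2) - h / 2) (0 - (2 : ℝ) ^ M / 2)
    have eM : (M : ℝ) * 2 ^ M = h * (M * 2 ^ s) := by rw [hh]; field_simp
    have b1 : h * (p.2 + 1) ≤ h * (M * 2 ^ s) := by rw [← eM]; linarith
    have b2 : h * (-p.2) ≤ h * (M * 2 ^ s) := by rw [← eM]; linarith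
    have c1 := le_of_mul_le_mul_left b1 hpos
    have c2 := le_of_mul_le_mul_left b2 hpos
    rw [Finset.mem_Ico]
    constructor
    · have : -p.2 ≤ (M : ℤ) * 2 ^ s := by exact_mod_cast c2
      linarith
    · have : p.2 + 1 ≤ (M : ℤ) * 2 ^ s := by exact_mod_cast c1
      linarith

lemma s13_tsum (M : ℕ) (F : ℤ × ℤ → ℝ) (hF : ∀ p, 0 ≤ F p) :
    ∑' p : {q : ℤ × ℤ // DyadicLagom M q}, F p.val ≤
      ∑ s ∈ Finset.range (2 * M + 1),
        ∑ k ∈ Finset.Ico (-((M : ℤ) * 2 ^ s)) ((M : ℤ) * 2 ^ s), F ((s : ℤ) - M, k) := by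
  classical
  apply Real.tsum_le_of_sum_le (fun p => hF _)
  intro S
  rw [Finset.sum_sigma']
  set Z := (Finset.range (2 * M + 1)).sigma
    (fun s => Finset.Ico (-((M : ℤ) * 2 ^ s)) ((M : ℤ) * 2 ^ s)) with hZ
  have hinj : Function.Injective (fun x : (_ : ℕ) × ℤ => (((x.1 : ℤ) - M, x.2) : ℤ × ℤ)) := by
    rintro ⟨s, k⟩ ⟨s', k'⟩ h
    simp only [Prod.mk.injEq] at h
    obtain ⟨h1, rfl⟩ := h
    have : s = s' := by omega
    subst this; rfl
  have e1 : ∑ x ∈ Z, F ((x.1 : ℤ) - M, x.2) =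
      ∑ p ∈ Z.image (fun x : (_ : ℕ) × ℤ => (((x.1 : ℤ) - M, x.2) : ℤ × ℤ)), F p := by
    rw [Finset.sum_image (fun a _ b _ h => hinj h)]
  have e2 : ∑ p ∈ S, F p.val = ∑ p ∈ S.image Subtype.val, F p := by
    rw [Finset.sum_image (fun a _ b _ h => Subtype.ext h)]
  rw [e1, e2]
  apply Finset.sum_le_sum_of_subset_of_nonneg _ (fun p _ _ => hF p)
  intro p hp
  rw [Finset.mem_image] at hp
  obtain ⟨q, _, rfl⟩ := hp
  obtain ⟨s, hs, h1, h2⟩ := s13_mem M q.val q.2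
  rw [Finset.mem_image]
  refine ⟨⟨s, q.val.2⟩, ?_, ?_⟩
  · rw [hZ, Finset.mem_sigma]; exact ⟨hs, h2⟩
  · exact Prod.ext h1.symm rfl

lemma s13_scale (θ a : ℝ) (hθ : 0 ≤ θ) (ha : 0 < a) (s : ℕ) :
    (a / 2 ^ s) ^ (θ + 3 / 2) * (2 ^ s / a) ≤
      a ^ (θ + 1 / 2) * (((1 : ℝ) / 2) ^ ((1 : ℝ) / 2)) ^ s := by
  have hs : (0 : ℝ) < 2 ^ s := by positivity
  have hb : 0 < a / 2 ^ s := by positivity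
  have e : θ + 3 / 2 = (θ + 1 / 2) + 1 := by ring
  have e2 : a / 2 ^ s * (2 ^ s / a) = 1 := by field_simp
  rw [e, Real.rpow_add_one hb.ne', mul_assoc, e2, mul_one, div_eq_mul_inv,
    Real.mul_rpow ha.le (by positivity)]
  apply mul_le_mul_of_nonneg_left _ (by positivity)
  have h1 : ((2 : ℝ) ^ s)⁻¹ ≤ 1 := inv_le_one_of_one_le₀ (one_le_pow₀ (by norm_num))
  refine (Real.rpow_le_rpow_of_exponent_ge (by positivity) h1
    (by linarith : (1 : ℝ) / 2 ≤ θ + 1 / 2)).trans (le_of_eq ?_)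
  rw [← inv_pow, ← Real.rpow_natCast, ← Real.rpow_natCast, ← Real.rpow_mul (by norm_num),
    ← Real.rpow_mul (by norm_num), mul_comm]
  norm_num

/-- For `|I| > 2^{M+2}`, the sum over dyadic lagom intervals `J ∈ 𝒟_M` of
`(|J|/|I|)^{θ_p+3/2}(1+|I|⁻¹|c(I)−c(J)|)^{−N}` is bounded by
`C' (2^M/|I|)^{θ_p+1/2}(1+M⁻¹ rdist(I,𝔹_{2^M}))^{−N}`. -/
theorem statement13 (θp NN : ℝ) (hθ : 0 ≤ θp) (hN : θp + 3/2 < NN) :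
    ∃ C' > 0, ∀ M : ℕ, 1 ≤ M → ∀ cI lI : ℝ, (2 : ℝ) ^ (M + 2) < lI →
      (∑' p : {q : ℤ × ℤ // DyadicLagom M q},
          ((2 : ℝ) ^ (-p.val.1) / lI) ^ (θp + 3/2) *
            (1 + |cI - (2 : ℝ) ^ (-p.val.1) * (p.val.2 + 1/2)| / lI) ^ (-NN))
        ≤ C' * ((2 : ℝ) ^ M / lI) ^ (θp + 1/2) *
            (1 + (M : ℝ)⁻¹ * rdistI cI lI 0 (2 ^ M)) ^ (-NN) := by
  obtain ⟨C, hC, hB⟩ := s13_B NN (by linarith)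
  set ρ : ℝ := ((1 : ℝ) / 2) ^ ((1 : ℝ) / 2) with hρ
  have hρ0 : 0 ≤ ρ := by positivity
  have hρ1 : ρ < 1 := Real.rpow_lt_one (by norm_num) (by norm_num) (by norm_num)
  have hg : 0 < (1 - ρ)⁻¹ := inv_pos.2 (by linarith)
  refine ⟨C * (1 - ρ)⁻¹, by positivity, ?_⟩
  intro M hM cI lI hL
  have hL0 : 0 < lI := lt_trans (by positivity) hL
  have hM0 : (0 : ℝ) < M := by exact_mod_cast hM
  obtain ⟨hr0, -⟩ := s13_rdist M cI lI hL
  have hb := hB M hM cI lI hL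
  have hD : 0 ≤ (1 + (M : ℝ)⁻¹ * rdistI cI lI 0 (2 ^ M)) ^ (-NN) := by positivity
  set D := (1 + (M : ℝ)⁻¹ * rdistI cI lI 0 (2 ^ M)) ^ (-NN)
  have ha0 : 0 < (2 : ℝ) ^ M / lI := by positivity
  have ht := s13_tsum M (fun p => ((2 : ℝ) ^ (-p.1) / lI) ^ (θp + 3/2) *
            (1 + |cI - (2 : ℝ) ^ (-p.1) * (p.2 + 1/2)| / lI) ^ (-NN))
            (fun p => by positivity)
  refine ht.trans ?_
  have hz : ∀ s : ℕ, (2 : ℝ) ^ (-((s : ℤ) - M)) = 2 ^ M / 2 ^ s := by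
    intro s
    rw [neg_sub, zpow_sub₀ (by norm_num), zpow_natCast, zpow_natCast]
  simp only [hz, ← Finset.mul_sum]
  have hstep : ∀ s ∈ Finset.range (2 * M + 1),
      ((2 : ℝ) ^ M / 2 ^ s / lI) ^ (θp + 3/2) *
        ∑ k ∈ Finset.Ico (-((M : ℤ) * 2 ^ s)) ((M : ℤ) * 2 ^ s),
          (1 + |cI - (2 : ℝ) ^ M / 2 ^ s * (k + 1 / 2)| / lI) ^ (-NN) ≤
      C * D * ((2 : ℝ) ^ M / lI) ^ (θp + 1/2) * ρ ^ s := by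
    intro s _
    have e : (2 : ℝ) ^ M / 2 ^ s / lI = 2 ^ M / lI / 2 ^ s := by ring
    rw [e]
    have h1 := mul_le_mul_of_nonneg_left (hb s)
      (by positivity : 0 ≤ ((2 : ℝ) ^ M / lI / 2 ^ s) ^ (θp + 3/2))
    refine h1.trans ?_
    have h2 := mul_le_mul_of_nonneg_left (s13_scale θp _ hθ ha0 s)
      (by positivity : 0 ≤ C * D)
    calc _ = C * D * (((2 : ℝ) ^ M / lI / 2 ^ s) ^ (θp + 3/2) * (2 ^ s / (2 ^ M / lI))) := by ring
      _ ≤ _ := h2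
      _ = _ := by ring
  refine (Finset.sum_le_sum hstep).trans ?_
  rw [← Finset.mul_sum]
  have hgeo : ∑ s ∈ Finset.range (2 * M + 1), ρ ^ s ≤ (1 - ρ)⁻¹ := by
    rw [← tsum_geometric_of_lt_one hρ0 hρ1]
    exact (summable_geometric_of_lt_one hρ0 hρ1).sum_le_tsum _ (fun _ _ => by positivity)
  calc _ ≤ C * D * ((2 : ℝ) ^ M / lI) ^ (θp + 1/2) * (1 - ρ)⁻¹ :=
        mul_le_mul_of_nonneg_left hgeo (by positivity)
    _ = _ := by ring
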